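/- For all integers m and n with 0 ≤ n < |m|(|m|+5)/2 + 4, the number of strongly concave compositions of n with rank m equals the number of integer partitions of n − |m|(|m|+1)/2; that is, V_d(m, n) = p(n − |m|(|m|+1)/2), where p(k) = 0 when k < 0. -/

import Mathlib

open scoped BigOperators

/-- `IsSCC n l k` says that the list `l = (a_1, ..., a_s)` of nonnegative integers
is a strongly concave composition of `n` with central part at (1-indexed) position `k`:
`a_1 > a_2 > ... > a_{k-1} > a_k < a_{k+1} < ... < a_s` and `a_1 + ... + a_s = n`. -/
def IsSCC (n : ℕ) (l : List ℕ) (k : ℕ) : Prop :=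
  1 ≤ k ∧ k ≤ l.length ∧ l.sum = n ∧
  (∀ i j : Fin l.length, (i : ℕ) < j → (j : ℕ) < k → l.get j < l.get i) ∧
  (∀ i j : Fin l.length, k - 1 ≤ (i : ℕ) → (i : ℕ) < j → l.get i < l.get j)

/-- The rank `s - 2k + 1` of a strongly concave composition with `s` parts and
central part at position `k`. -/
def sccRank (l : List ℕ) (k : ℕ) : ℤ := (l.length : ℤ) - 2 * k + 1

/-- `Vd m n` is the number of strongly concave compositions of `n` with rank `m`. -/
noncomputable def Vd (m : ℤ) (n : ℕ) : ℕ :=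
  Set.ncard {p : List ℕ × ℕ | IsSCC n p.1 p.2 ∧ sccRank p.1 p.2 = m}

/-- `VdTotal n` is the total number of strongly concave compositions of `n`. -/
noncomputable def VdTotal (n : ℕ) : ℕ :=
  Set.ncard {p : List ℕ × ℕ | IsSCC n p.1 p.2}

/-- The partition function, extended by `0` to negative integers. -/
def partitionCount (k : ℤ) : ℕ :=
  if 0 ≤ k then Fintype.card (Nat.Partition k.toNat) else 0

/-!
Reversal negates the rank, so let the rank be `M ≥ 0` and put `N = n - (M + 1).choose 2`; the
hypothesis on `n` says `N < 2 * (M + 2)`. A composition of rank `M` with central part at `k` has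
`k - 1` parts before the central part and `M + k - 1` parts after it. The strict inequalities force
a minimal weight, and below the bound on `N` they leave only two shapes: `k = 1`, or `k = 2` with
central part `0`. Subtracting `0, 1, 2, …` from the increasing branch turns the first shape into the
partitions of `N` into at most `M + 1` parts. In the second shape it leaves the left part `a` and
`M + 1` further numbers, which encode a partition of `N` into exactly `M + 1 + a` parts: such a
partition has too many parts for its size to have more than `M + 1` parts different from `1`.
-/

/-! ### Strictly increasing lists -/

lemma choose_two_succ (k : ℕ) : (k + 1).choose 2 = k + k.choose 2 := by
  rw [Nat.choose_succ_succ' k 1, Nat.choose_one_right]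

/-- The strictly increasing list obtained by sorting `s` and adding `0, 1, 2, …` to its successive
entries: the standard bijection between multisets and strictly increasing lists of a given size. -/
def staircase (s : Multiset ℕ) : List ℕ := s.sort.mapIdx fun i a ↦ a + i

@[simp]
lemma length_staircase (s : Multiset ℕ) : (staircase s).length = s.card := by
  simp [staircase]

lemma sum_mapIdx_add_index (l : List ℕ) :
    (l.mapIdx fun i a ↦ a + i).sum = l.sum + l.length.choose 2 := by
  induction l using List.reverseRecOn with
  | nil => simp
  | append_singleton l a ih =>
    simp only [List.mapIdx_concat, List.sum_append, ih, List.length_append, List.length_singleton,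
      List.sum_singleton, choose_two_succ]
    ring

lemma sum_staircase (s : Multiset ℕ) : (staircase s).sum = s.sum + s.card.choose 2 := by
  rw [staircase, sum_mapIdx_add_index, Multiset.length_sort, ← Multiset.sum_coe, Multiset.sort_eq]

lemma sortedLT_staircase (s : Multiset ℕ) : (staircase s).SortedLT := by
  refine List.sortedLT_of_getElem_lt_getElem_of_lt fun i j hi hj hij ↦ ?_
  have hle := (s.pairwise_sort (· ≤ ·)).sortedLE.getElem_le_getElem_of_le
    (hi := by simpa using hi) (hj := by simpa using hj) hij.le
  simp only [staircase, List.getElem_mapIdx]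
  lia

lemma staircase_injective : Function.Injective staircase := by
  intro s t hst
  have hsort : s.sort = t.sort := by
    refine List.ext_getElem (by simpa using congrArg List.length hst) fun i hi _ ↦ ?_
    have hget := List.getElem_of_eq hst (i := i) (by simpa using hi)
    simpa [staircase] using hget
  rw [← s.sort_eq (· ≤ ·), hsort, Multiset.sort_eq]

lemma getElem_add_sub_le_getElem {l : List ℕ} (hl : l.SortedLT) {i j : ℕ} (hij : i ≤ j)
    (hj : j < l.length) : l[i] + (j - i) ≤ l[j] := by
  induction j, hij using Nat.le_induction with
  | base => simp
  | succ j hij ih =>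
    have hlt := hl.getElem_lt_getElem_of_lt (hi := by lia) (hj := hj) j.lt_succ_self
    have := ih (by lia)
    lia

lemma exists_staircase_eq {l : List ℕ} (hl : l.SortedLT) : ∃ s, staircase s = l := by
  have hindex : ∀ i (hi : i < l.length), i ≤ l[i] := fun i hi ↦
    (Nat.le_add_left _ _).trans (getElem_add_sub_le_getElem hl i.zero_le hi)
  have hsorted : (l.mapIdx fun i a ↦ a - i).SortedLE := by
    refine List.sortedLE_of_getElem_le_getElem_of_le fun i j hi hj hij ↦ ?_
    have := getElem_add_sub_le_getElem hl hij (by simpa using hj)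
    simp only [List.getElem_mapIdx]
    lia
  refine ⟨↑(l.mapIdx fun i a ↦ a - i), ?_⟩
  rw [staircase, Multiset.coe_sort, List.mergeSort_eq_self _ hsorted.pairwise]
  refine List.ext_getElem (by simp) fun i _ hi ↦ ?_
  simpa using Nat.sub_add_cancel (hindex i hi)

lemma staircase_zero_cons (s : Multiset ℕ) :
    staircase (0 ::ₘ s) = 0 :: (staircase s).map (· + 1) := by
  have hsort : (0 ::ₘ s).sort = 0 :: s.sort := Multiset.sort_cons _ _ _ fun b _ ↦ b.zero_le
  rw [staircase, hsort, List.mapIdx_cons]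
  exact congrArg (List.cons 0) (List.ext_getElem (by simp) (by simp [staircase, add_assoc]))

lemma zero_mem_of_zero_mem_staircase {s : Multiset ℕ} (h : 0 ∈ staircase s) : 0 ∈ s := by
  obtain ⟨i, hi, hsum⟩ := List.mem_mapIdx.1 h
  rw [← Multiset.mem_sort (· ≤ ·), ← (Nat.add_eq_zero_iff.1 hsum).1]
  exact List.getElem_mem hi

lemma choose_length_le_sum {l : List ℕ} (hl : l.SortedLT) : l.length.choose 2 ≤ l.sum := by
  obtain ⟨s, rfl⟩ := exists_staircase_eq hl
  rw [length_staircase, sum_staircase]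
  exact Nat.le_add_left _ _

lemma choose_length_succ_le_sum {l : List ℕ} (hl : l.SortedLT) (h0 : 0 ∉ l) :
    (l.length + 1).choose 2 ≤ l.sum := by
  have hcons : (0 :: l).SortedLT := by
    refine (List.pairwise_cons.2 ⟨fun a ha ↦ ?_, hl.pairwise⟩).sortedLT
    exact Nat.pos_of_ne_zero fun h ↦ h0 (h ▸ ha)
  simpa using choose_length_le_sum hcons

/-! ### Partitions with few and with many parts -/

/-- The partitions of `N` into at most `k` parts, each padded with zeros to exactly `k` entries. -/
def paddedPartitions (k N : ℕ) : Set (Multiset ℕ) := {s | s.card = k ∧ s.sum = N}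

/-- The pairs `(a, s)`, with `a` positive, that encode a partition of `N` into `k + a` parts: the
largest `k` parts are the entries of `s` increased by one, and the other `a` parts are ones. -/
def oneTailedPartitions (k N : ℕ) : Set (ℕ × Multiset ℕ) :=
  {p | 0 < p.1 ∧ p.2.card = k ∧ p.2.sum + k + p.1 = N}

lemma sum_map_add_one (s : Multiset ℕ) : (s.map (· + 1)).sum = s.sum + s.card := by
  simp [Multiset.sum_map_add]

lemma exists_map_add_one_eq {s : Multiset ℕ} (h0 : 0 ∉ s) :
    ∃ t : Multiset ℕ, t.map (· + 1) = s := by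
  refine ⟨s.map (· - 1), ?_⟩
  rw [Multiset.map_map]
  refine (Multiset.map_congr rfl fun a ha ↦ ?_).trans s.map_id
  exact Nat.sub_add_cancel (Nat.pos_of_ne_zero fun h ↦ h0 (h ▸ ha))

lemma two_mul_card_le_sum_add_count_one {s : Multiset ℕ} (h0 : 0 ∉ s) :
    2 * s.card ≤ s.sum + s.count 1 := by
  induction s using Multiset.induction with
  | empty => simp
  | cons a s ih =>
    obtain ⟨ha, hs⟩ := not_or.1 (Multiset.mem_cons.not.1 h0)
    have := ih hs
    simp only [Multiset.card_cons, Multiset.sum_cons, Multiset.count_cons]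
    split_ifs <;> lia

lemma bijOn_filter_paddedPartitions (k N : ℕ) :
    Set.BijOn (Multiset.filter (· ≠ 0)) (paddedPartitions k N)
      {s | (0 ∉ s ∧ s.sum = N) ∧ s.card ≤ k} := by
  have hsplit (s : Multiset ℕ) :
      s.filter (· ≠ 0) + Multiset.replicate (s.card - (s.filter (· ≠ 0)).card) 0 = s := by
    have hzeros : s.filter (¬ · ≠ 0) = Multiset.replicate (s.count 0) 0 := by
      simpa using s.filter_eq' 0
    have hadd := s.filter_add_not (· ≠ 0)
    have hcard := congrArg Multiset.card hadd
    rw [hzeros] at hadd hcard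
    rw [Multiset.card_add, Multiset.card_replicate] at hcard
    rw [← hcard, Nat.add_sub_cancel_left, hadd]
  refine ⟨?_, ?_, ?_⟩
  · rintro s ⟨rfl, rfl⟩
    have hsum := congrArg Multiset.sum (hsplit s)
    exact ⟨⟨by simp, by simpa using hsum⟩, Multiset.card_le_card (s.filter_le _)⟩
  · rintro s ⟨hs, -⟩ t ⟨ht, -⟩ hst
    rw [← hsplit s, ← hsplit t, hs, ht, hst]
  · rintro s ⟨⟨h0, hsum⟩, hcard⟩
    refine ⟨s + Multiset.replicate (k - s.card) 0, ⟨?_, by simpa using hsum⟩, ?_⟩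
    · simpa using Nat.add_sub_cancel' hcard
    · have hpos : s.filter (· ≠ 0) = s := Multiset.filter_eq_self.2 fun a ha h ↦ h0 (h ▸ ha)
      simpa [hpos, Multiset.filter_eq_nil] using fun a ha ↦ Multiset.eq_of_mem_replicate ha

lemma bijOn_oneTailedPartitions {k N : ℕ} (hN : N < 2 * (k + 1)) :
    Set.BijOn (fun p : ℕ × Multiset ℕ ↦ Multiset.replicate p.1 1 + p.2.map (· + 1))
      (oneTailedPartitions k N) {s | (0 ∉ s ∧ s.sum = N) ∧ ¬ s.card ≤ k} := by
  refine ⟨?_, ?_, ?_⟩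
  · rintro ⟨a, s⟩ ⟨ha, rfl, hsum⟩
    refine ⟨⟨by simp [Multiset.mem_replicate], ?_⟩, by simpa using ha.ne'⟩
    simp only [Multiset.sum_add, Multiset.sum_replicate, sum_map_add_one, smul_eq_mul, ← hsum]
    ring
  · rintro ⟨a, s⟩ ⟨-, hs, -⟩ ⟨b, t⟩ ⟨-, ht, -⟩ hst
    have hab : a = b := by simpa [hs, ht] using congrArg Multiset.card hst
    subst hab
    simpa [Multiset.map_injective (add_left_injective 1) |>.eq_iff] using hst
  · rintro s ⟨⟨h0, hsum⟩, hcard⟩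
    have hones : Multiset.replicate (s.card - k) 1 ≤ s := by
      have := two_mul_card_le_sum_add_count_one h0
      exact Multiset.le_count_iff_replicate_le.1 (by lia)
    obtain ⟨r, hr⟩ := Multiset.le_iff_exists_add.1 hones
    obtain ⟨t, rfl⟩ := exists_map_add_one_eq fun h ↦ h0 (hr ▸ Multiset.mem_add.2 (.inr h))
    have hcard' := congrArg Multiset.card hr
    have hsum' := congrArg Multiset.sum hr
    simp only [Multiset.card_add, Multiset.card_replicate, Multiset.card_map] at hcard'
    simp only [Multiset.sum_add, Multiset.sum_replicate, sum_map_add_one, smul_eq_mul] at hsum'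
    refine ⟨(s.card - k, t), ⟨by lia, by lia, ?_⟩, hr.symm⟩
    simp only
    lia

lemma encard_setOf_add_encard_setOf_not {α : Type*} (S : Set α) (p : α → Prop) :
    {x | x ∈ S ∧ p x}.encard + {x | x ∈ S ∧ ¬ p x}.encard = S.encard := by
  rw [add_comm]
  exact S.encard_sdiff_add_encard_inter {x | p x}

lemma card_partition_eq_encard_add_encard {k N : ℕ} (hN : N < 2 * (k + 1)) :
    (Fintype.card (Nat.Partition N) : ℕ∞) =
      (paddedPartitions k N).encard + (oneTailedPartitions k N).encard := by
  have hparts : Set.range (Nat.Partition.parts (n := N)) = {s | 0 ∉ s ∧ s.sum = N} := by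
    ext s
    constructor
    · rintro ⟨π, rfl⟩
      exact ⟨fun h ↦ (π.parts_pos h).false, π.parts_sum⟩
    · rintro ⟨h0, hsum⟩
      exact ⟨⟨s, fun {i} hi ↦ Nat.pos_of_ne_zero fun h ↦ h0 (h ▸ hi), hsum⟩, rfl⟩
  have hinj : Function.Injective (Nat.Partition.parts (n := N)) := fun _ _ ↦ Nat.Partition.ext
  rw [Set.encard_congr (bijOn_filter_paddedPartitions k N).equiv,
    Set.encard_congr (bijOn_oneTailedPartitions hN).equiv]
  refine .trans ?_ (encard_setOf_add_encard_setOf_not {s : Multiset ℕ | 0 ∉ s ∧ s.sum = N}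
    fun s ↦ s.card ≤ k).symm
  rw [← hparts, ← Set.image_univ, hinj.encard_image, Set.encard_univ, ENat.card_eq_coe_fintype_card]

/-! ### Strongly concave compositions -/

lemma isSCC_iff {n k : ℕ} {l : List ℕ} :
    IsSCC n l k ↔
      1 ≤ k ∧ k ≤ l.length ∧ l.sum = n ∧ (l.take k).SortedGT ∧ (l.drop (k - 1)).SortedLT := by
  unfold IsSCC
  refine and_congr_right fun hk ↦ and_congr_right fun hkl ↦ and_congr_right fun _ ↦ and_congr ?_ ?_
  · rw [List.sortedGT_iff_pairwise, List.pairwise_iff_getElem]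
    simp only [List.getElem_take, List.length_take]
    exact ⟨fun h i j _ hj hij ↦ h ⟨i, by lia⟩ ⟨j, by lia⟩ hij (by lia),
      fun h i j hij hj ↦ h i j (by lia) (by lia) hij⟩
  · rw [List.sortedLT_iff_pairwise, List.pairwise_iff_getElem]
    simp only [List.getElem_drop, List.length_drop]
    refine ⟨fun h i j hi hj hij ↦ h ⟨_, by lia⟩ ⟨_, by lia⟩ (by simp) (by simpa), ?_⟩
    intro h i j hi hij
    have := h (i - (k - 1)) (j - (k - 1)) (by lia) (by lia) (by lia)
    simpa only [Nat.add_sub_cancel' hi, Nat.add_sub_cancel' (hi.trans hij.le),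
      List.get_eq_getElem] using this

/-- The strongly concave compositions of `n` of rank `m`, each paired with the position of its
central part. -/
def rankedSCC (m : ℤ) (n : ℕ) : Set (List ℕ × ℕ) := {p | IsSCC n p.1 p.2 ∧ sccRank p.1 p.2 = m}

lemma IsSCC.reverse {n k : ℕ} {l : List ℕ} (h : IsSCC n l k) :
    IsSCC n l.reverse (l.length + 1 - k) := by
  obtain ⟨hk, hkl, hsum, hgt, hlt⟩ := isSCC_iff.1 h
  refine isSCC_iff.2 ⟨by lia, by rw [List.length_reverse]; lia, by simpa using hsum, ?_, ?_⟩
  · rw [List.take_reverse, show l.length - (l.length + 1 - k) = k - 1 by lia]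
    exact hlt.reverse
  · rw [List.drop_reverse, show l.length - (l.length + 1 - k - 1) = k by lia]
    exact hgt.reverse

lemma sccRank_reverse {l : List ℕ} {k : ℕ} (hk : k ≤ l.length) :
    sccRank l.reverse (l.length + 1 - k) = -sccRank l k := by
  simp only [sccRank, List.length_reverse]
  lia

lemma Vd_neg (m : ℤ) (n : ℕ) : Vd (-m) n = Vd m n := by
  have hmaps (m : ℤ) : Set.MapsTo (fun p : List ℕ × ℕ ↦ (p.1.reverse, p.1.length + 1 - p.2))
      (rankedSCC m n) (rankedSCC (-m) n) := by
    rintro ⟨l, k⟩ ⟨h, hm⟩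
    exact ⟨h.reverse, (sccRank_reverse h.2.1).trans (congrArg _ hm)⟩
  have hinv (m : ℤ) : Set.LeftInvOn (fun p : List ℕ × ℕ ↦ (p.1.reverse, p.1.length + 1 - p.2))
      (fun p : List ℕ × ℕ ↦ (p.1.reverse, p.1.length + 1 - p.2)) (rankedSCC m n) := by
    rintro ⟨l, k⟩ ⟨h, -⟩
    have := h.2.1
    simp only [List.reverse_reverse, List.length_reverse, Prod.mk.injEq, true_and]
    lia
  exact (Set.BijOn.ncard_eq (Set.InvOn.bijOn ⟨hinv m, hinv (-m)⟩ (hmaps m)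
    (by simpa only [neg_neg] using hmaps (-m)))).symm

lemma Vd_natAbs (m : ℤ) (n : ℕ) : Vd m.natAbs n = Vd m n := by
  rcases m.natAbs_eq with hm | hm
  · rw [← hm]
  · rw [hm, Int.natAbs_neg, Int.natAbs_natCast, Vd_neg]

lemma isSCC_one_iff {n : ℕ} {l : List ℕ} :
    IsSCC n l 1 ↔ l ≠ [] ∧ l.sum = n ∧ l.SortedLT := by
  rw [isSCC_iff]
  rcases l with - | ⟨a, l⟩ <;> simp [List.sortedGT_iff_pairwise]

lemma isSCC_two_iff {n a b : ℕ} {l : List ℕ} :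
    IsSCC n (a :: b :: l) 2 ↔ b < a ∧ a + (b :: l).sum = n ∧ (b :: l).SortedLT := by
  rw [isSCC_iff, and_left_comm (a := b < a)]
  simp [List.sortedGT_iff_pairwise]

namespace IsSCC

variable {n k : ℕ} {l : List ℕ}

lemma choose_le_sum_take (h : IsSCC n l k) : k.choose 2 ≤ (l.take (k - 1)).sum := by
  obtain ⟨hk, hkl, -, hgt, -⟩ := isSCC_iff.1 h
  have hcons : l.take k = l.take (k - 1) ++ [l[k - 1]] := by
    simp [Nat.sub_add_cancel hk]
  rw [hcons, List.sortedGT_iff_pairwise, List.pairwise_append] at hgt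
  have h0 : 0 ∉ (l.take (k - 1)).reverse := fun h0 ↦
    Nat.not_lt_zero _ (hgt.2.2 0 (by simpa using h0) _ (List.mem_singleton_self _))
  have hlen : (l.take (k - 1)).reverse.length + 1 = k := by
    simp only [List.length_reverse, List.length_take]
    lia
  simpa only [hlen, List.sum_reverse] using
    choose_length_succ_le_sum hgt.1.sortedGT.reverse h0

lemma choose_add_choose_le (h : IsSCC n l k) :
    k.choose 2 + (l.length + 1 - k).choose 2 ≤ n := by
  obtain ⟨hk, hkl, hsum, -, hlt⟩ := isSCC_iff.1 h
  rw [← hsum, ← l.sum_take_add_sum_drop (k - 1)]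
  refine add_le_add h.choose_le_sum_take ?_
  have hright := choose_length_le_sum hlt
  rwa [List.length_drop, show l.length - (k - 1) = l.length + 1 - k by lia] at hright

lemma choose_add_choose_le_of_zero_notMem (h : IsSCC n l k) (h0 : 0 ∉ l) :
    k.choose 2 + (l.length + 2 - k).choose 2 ≤ n := by
  obtain ⟨hk, hkl, hsum, -, hlt⟩ := isSCC_iff.1 h
  rw [← hsum, ← l.sum_take_add_sum_drop (k - 1)]
  refine add_le_add h.choose_le_sum_take ?_
  have hright := choose_length_succ_le_sum hlt fun hmem ↦ h0 (List.mem_of_mem_drop hmem)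
  rwa [List.length_drop, show l.length - (k - 1) + 1 = l.length + 2 - k by lia] at hright

end IsSCC

lemma bijOn_staircase (M N : ℕ) :
    Set.BijOn (fun s ↦ (staircase s, 1)) (paddedPartitions (M + 1) N)
      {p | p ∈ rankedSCC M (N + (M + 1).choose 2) ∧ p.2 = 1} := by
  refine ⟨?_, ?_, ?_⟩
  · rintro s ⟨hcard, rfl⟩
    refine ⟨⟨isSCC_one_iff.2 ⟨?_, by rw [sum_staircase, hcard], sortedLT_staircase s⟩, ?_⟩, rfl⟩
    · exact List.ne_nil_of_length_pos (by simp [hcard])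
    · simp only [sccRank, length_staircase, hcard]
      lia
  · exact fun s _ t _ hst ↦ staircase_injective (congrArg Prod.fst hst)
  · rintro ⟨l, k⟩ ⟨⟨h, hrank⟩, rfl⟩
    obtain ⟨-, hsum, hlt⟩ := isSCC_one_iff.1 h
    obtain ⟨s, rfl⟩ := exists_staircase_eq hlt
    have hcard : s.card = M + 1 := by
      simp only [sccRank, length_staircase] at hrank
      lia
    rw [sum_staircase, hcard] at hsum
    exact ⟨s, ⟨hcard, Nat.add_right_cancel hsum⟩, rfl⟩

lemma exists_eq_cons_zero_cons {M N k : ℕ} {l : List ℕ} (hN : N < 2 * (M + 2))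
    (h : (l, k) ∈ rankedSCC M (N + (M + 1).choose 2)) (hk : k ≠ 1) :
    k = 2 ∧ ∃ a r, l = a :: 0 :: r := by
  obtain ⟨hscc, hrank⟩ := h
  have hlen : l.length + 1 = M + 2 * k := by
    simp only [sccRank] at hrank
    lia
  have hchoose : (M + 3).choose 2 = 2 * M + 3 + (M + 1).choose 2 := by
    simp only [choose_two_succ]
    ring
  have hk2 : k = 2 := by
    by_contra hk2
    have hk3 : 3 ≤ k := by
      have := hscc.1
      lia
    have hleft : 3 ≤ k.choose 2 := Nat.choose_le_choose 2 hk3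
    have hright : (M + 3).choose 2 ≤ (l.length + 1 - k).choose 2 := Nat.choose_le_choose 2 (by lia)
    have := hscc.choose_add_choose_le
    lia
  subst hk2
  have h0 : 0 ∈ l := by
    by_contra h0
    have := hscc.choose_add_choose_le_of_zero_notMem h0
    rw [show l.length + 2 - 2 = M + 3 by lia, Nat.choose_self] at this
    lia
  obtain ⟨a, b, r, rfl⟩ : ∃ a b r, l = a :: b :: r := by
    match l, hscc.2.1 with
    | a :: b :: r, _ => exact ⟨a, b, r, rfl⟩
  obtain ⟨hba, -, hlt⟩ := isSCC_two_iff.1 hscc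
  have hbr := List.rel_of_pairwise_cons hlt.pairwise (a' := 0)
  have hb : b = 0 := by
    simp only [List.mem_cons] at h0
    lia
  exact ⟨rfl, a, r, hb ▸ rfl⟩

lemma bijOn_cons_staircase {M N : ℕ} (hN : N < 2 * (M + 2)) :
    Set.BijOn (fun p : ℕ × Multiset ℕ ↦ (p.1 :: staircase (0 ::ₘ p.2), 2))
      (oneTailedPartitions (M + 1) N)
      {p | p ∈ rankedSCC M (N + (M + 1).choose 2) ∧ ¬ p.2 = 1} := by
  have hsum_zero_cons {s : Multiset ℕ} (hcard : s.card = M + 1) :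
      (staircase (0 ::ₘ s)).sum = s.sum + (M + 1) + (M + 1).choose 2 := by
    rw [sum_staircase, Multiset.sum_cons, Multiset.card_cons, hcard, choose_two_succ (M + 1)]
    ring
  refine ⟨?_, ?_, ?_⟩
  · rintro ⟨a, s⟩ ⟨ha, hcard, hsum⟩
    refine ⟨⟨?_, ?_⟩, by simp⟩
    · simp only [staircase_zero_cons]
      refine isSCC_two_iff.2 ⟨ha, ?_⟩
      rw [← staircase_zero_cons, hsum_zero_cons hcard]
      exact ⟨by lia, sortedLT_staircase _⟩
    · simp only [sccRank, List.length_cons, length_staircase, Multiset.card_cons, hcard]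
      lia
  · rintro ⟨a, s⟩ - ⟨b, t⟩ - hst
    simpa [staircase_injective.eq_iff] using hst
  · rintro ⟨l, k⟩ ⟨h, hk⟩
    obtain ⟨rfl, a, r, rfl⟩ := exists_eq_cons_zero_cons hN h hk
    obtain ⟨hscc, hrank⟩ := h
    obtain ⟨ha, hsum, hlt⟩ := isSCC_two_iff.1 hscc
    obtain ⟨t, ht⟩ := exists_staircase_eq hlt
    obtain ⟨s, rfl⟩ := Multiset.exists_cons_of_mem
      (zero_mem_of_zero_mem_staircase (ht ▸ List.mem_cons_self))
    have hcard : s.card = M + 1 := by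
      have hlen := congrArg List.length ht
      simp only [length_staircase, Multiset.card_cons, List.length_cons, sccRank] at hlen hrank
      lia
    rw [← ht, hsum_zero_cons hcard] at hsum
    exact ⟨(a, s), ⟨ha, hcard, by lia⟩, by simp only [ht]⟩

lemma Vd_add_choose_eq_card_partition {M N : ℕ} (hN : N < 2 * (M + 2)) :
    Vd M (N + (M + 1).choose 2) = Fintype.card (Nat.Partition N) := by
  have hencard : (rankedSCC M (N + (M + 1).choose 2)).encard = Fintype.card (Nat.Partition N) := by
    rw [card_partition_eq_encard_add_encard (k := M + 1) hN,
      Set.encard_congr (bijOn_staircase M N).equiv,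
      Set.encard_congr (bijOn_cons_staircase hN).equiv]
    exact (encard_setOf_add_encard_setOf_not _ _).symm
  exact congrArg ENat.toNat hencard

lemma Vd_eq_zero_of_lt_choose {M n : ℕ} (hn : n < (M + 1).choose 2) : Vd M n = 0 := by
  have hempty : rankedSCC M n = ∅ := by
    refine Set.eq_empty_of_forall_notMem ?_
    rintro ⟨l, k⟩ ⟨hscc, hrank⟩
    have hright : (M + 1).choose 2 ≤ (l.length + 1 - k).choose 2 := by
      refine Nat.choose_le_choose 2 ?_
      have := hscc.1
      simp only [sccRank] at hrank
      lia
    have := hscc.choose_add_choose_le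
    lia
  exact (congrArg Set.ncard hempty).trans (Set.ncard_empty _)

lemma mul_succ_div_two_eq_choose (M : ℕ) : (M * (M + 1) / 2 : ℤ) = (M + 1).choose 2 := by
  rw [Nat.choose_two_right, Nat.add_sub_cancel, mul_comm]
  norm_cast

theorem stmt_1 (m : ℤ) (n : ℕ) (h : (n : ℤ) < |m| * (|m| + 5) / 2 + 4) :
    Vd m n = partitionCount ((n : ℤ) - |m| * (|m| + 1) / 2) := by
  have hbound : |m| * (|m| + 5) / 2 = |m| * (|m| + 1) / 2 + 2 * |m| := by
    rw [← Int.add_mul_ediv_right _ _ two_ne_zero]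
    ring_nf
  rw [hbound] at h
  rw [← Vd_natAbs]
  rw [Int.abs_eq_natAbs, mul_succ_div_two_eq_choose] at h ⊢
  generalize m.natAbs = M at h ⊢
  rcases le_or_gt ((M + 1).choose 2) n with hle | hlt
  · obtain ⟨N, rfl⟩ := Nat.exists_eq_add_of_le' hle
    rw [Vd_add_choose_eq_card_partition (by lia), partitionCount, if_pos (by lia)]
    simp
  · rw [Vd_eq_zero_of_lt_choose hlt, partitionCount, if_neg (by lia)]
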